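/- Let μ₁ < 0 and let n ≥ 2 be an integer. Let h ∈ C²((0,∞)) ∩ C¹([0,∞)) be a solution of the steady equation 2r²h(r)h''(r) = (n-1)h(r)(h(r)-1) + r h'(r)(r h'(r) - (n-1)), h(r) > 0 for r > 0, with h(0) = 1 and h'(0) = μ₁, and set u(r) = r h(r). Then: if n ≥ 4, then u'(r) > 0 for all r > 0; if 2 ≤ n < 4, then either u'(r) > 0 for all r > 0, or there exists a constant s₀ > 0 such that u'(r) > 0 for 0 < r < s₀, u'(s₀) = 0, and u'(r) < 0 for r > s₀. Moreover, for any n ≥ 2, if u'(r) > 0 for all r > 0, then u'(r) → 0 as r → ∞. -/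

import Mathlib

open Set Filter Topology

/-- `h` is a solution of the steady equation
`2r²h h'' = (n-1)h(h-1) + r h'(r h' - (n-1))`, `h > 0` on `(0,∞)`,
with `h ∈ C²((0,∞)) ∩ C¹([0,∞))`, `h(0) = 1` and `h'(0) = μ₁`. -/
def IsSteadySol (n : ℕ) (μ₁ : ℝ) (h : ℝ → ℝ) : Prop :=
  ContDiffOn ℝ 2 h (Set.Ioi 0) ∧ ContDiffOn ℝ 1 h (Set.Ici 0) ∧
  (∀ r : ℝ, 0 < r →
    2 * r ^ 2 * h r * deriv (deriv h) r =
      ((n : ℝ) - 1) * h r * (h r - 1) +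
        r * deriv h r * (r * deriv h r - ((n : ℝ) - 1)) ∧ 0 < h r) ∧
  h 0 = 1 ∧ derivWithin h (Set.Ici 0) 0 = μ₁

lemma aux_first_zero (f : ℝ → ℝ) (a : ℝ) (hc : ContinuousOn f (Ioi a))
    (h0 : ∀ᶠ r in 𝓝[>] a, 0 < f r) (hex : ∃ r, a < r ∧ f r ≤ 0) :
    ∃ z, a < z ∧ f z = 0 ∧ ∀ r, a < r → r < z → 0 < f r := by
  obtain ⟨b, hb, hfb⟩ := hex
  obtain ⟨d, hd, hd2⟩ := (mem_nhdsGT_iff_exists_Ioo_subset).1 h0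
  have hd' : a < d := hd
  have hpos : ∀ r, a < r → r < d → 0 < f r := fun r h1 h2 => hd2 ⟨h1, h2⟩
  have hdb : d ≤ b := by
    by_contra hlt
    push Not at hlt
    exact absurd (hpos b hb hlt) (not_lt.2 hfb)
  set c := (a + d) / 2 with hcdef
  have hac : a < c := by rw [hcdef]; linarith
  have hcd : c < d := by rw [hcdef]; linarith
  have hcc : ContinuousOn f (Icc c b) := hc.mono (fun x hx => lt_of_lt_of_le hac hx.1)
  have hcl : IsClosed (Icc c b ∩ f ⁻¹' (Iic 0)) := hcc.preimage_isClosed_of_isClosed isClosed_Icc isClosed_Iic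
  have hne : (Icc c b ∩ f ⁻¹' (Iic 0)).Nonempty := ⟨b, ⟨by linarith, le_rfl⟩, hfb⟩
  have hbd : BddBelow (Icc c b ∩ f ⁻¹' (Iic 0)) := ⟨c, fun x hx => hx.1.1⟩
  have hz := hcl.csInf_mem hne hbd
  set z := sInf (Icc c b ∩ f ⁻¹' (Iic 0)) with hzdef
  have hlow : ∀ r, a < r → r < z → 0 < f r := by
    intro r h1 h2
    by_contra hn
    push Not at hn
    have hrd : d ≤ r := by
      by_contra hlt
      push Not at hlt
      exact absurd (hpos r h1 hlt) (not_lt.2 hn)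
    have : z ≤ r := csInf_le hbd ⟨⟨by linarith, by linarith [hz.1.2]⟩, hn⟩
    linarith
  have haz : a < z := lt_of_lt_of_le hac hz.1.1
  refine ⟨z, haz, le_antisymm hz.2 ?_, hlow⟩
  have hca : ContinuousAt f z := hc.continuousAt (Ioi_mem_nhds haz)
  have ht : Tendsto f (𝓝[<] z) (𝓝 (f z)) := hca.tendsto.mono_left nhdsWithin_le_nhds
  refine ge_of_tendsto ht ?_
  filter_upwards [Ioo_mem_nhdsLT haz] with r hr
  exact (hlow r hr.1 hr.2).le

lemma aux_deriv_nonpos (f : ℝ → ℝ) (a z f' : ℝ) (haz : a < z) (hz : f z = 0)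
    (hp : ∀ r, a < r → r < z → 0 < f r) (hd : HasDerivAt f f' z) : f' ≤ 0 := by
  have ht := (hasDerivAt_iff_tendsto_slope.1 hd).mono_left
    (nhdsWithin_mono z (fun x (hx : x < z) => ne_of_lt hx) : 𝓝[<] z ≤ 𝓝[≠] z)
  refine le_of_tendsto ht ?_
  filter_upwards [Ioo_mem_nhdsLT haz] with r hr
  rw [slope_def_field, hz]
  have := hp r hr.1 hr.2
  apply div_nonpos_of_nonneg_of_nonpos <;> linarith [hr.2]

lemma aux_right_neg (f : ℝ → ℝ) (z f' : ℝ) (hz : f z = 0) (hd : HasDerivAt f f' z)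
    (hf : f' < 0) : ∀ᶠ r in 𝓝[>] z, f r < 0 := by
  have ht := (hasDerivAt_iff_tendsto_slope.1 hd).mono_left
    (nhdsWithin_mono z (fun x (hx : z < x) => ne_of_gt hx) : 𝓝[>] z ≤ 𝓝[≠] z)
  filter_upwards [ht.eventually_lt_const hf, self_mem_nhdsWithin] with r hr hr2
  rw [slope_def_field, hz] at hr
  have hr2 : z < r := hr2
  by_contra hn
  push Not at hn
  have : 0 ≤ (f r - 0) / (r - z) := div_nonneg (by linarith) (by linarith)
  linarith

/-- no zero when `w' ≥ g w`. -/
lemma aux_no_zero (w w' g : ℝ → ℝ) (z : ℝ) (hz0 : 0 < z) (hw : ∀ r, 0 < r → HasDerivAt w (w' r) r)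
    (hg : ContinuousOn g (Ioi 0)) (hwg : ∀ r, 0 < r → g r * w r ≤ w' r)
    (hp : ∀ r, 0 < r → r < z → 0 < w r) (hz : w z = 0) : False := by
  have hsub : Icc (z/2) z ⊆ Ioi 0 := fun x hx => by
    have := hx.1
    show (0:ℝ) < x
    linarith
  obtain ⟨K, hK⟩ := (isCompact_Icc (a := z/2) (b := z)).bddBelow_image (hg.mono hsub)
  have hder : ∀ r, 0 < r → HasDerivAt (fun r => Real.exp (-K * r) * w r)
      (Real.exp (-K * r) * (-K * 1) * w r + Real.exp (-K * r) * w' r) r := fun r hr =>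
    (((hasDerivAt_id r).const_mul (-K)).exp).mul (hw r hr)
  have hm : MonotoneOn (fun r => Real.exp (-K * r) * w r) (Icc (z/2) z) := by
    apply monotoneOn_of_deriv_nonneg (convex_Icc _ _)
    · exact fun r hr => (hder r (hsub hr)).continuousAt.continuousWithinAt
    · intro r hr
      rw [interior_Icc] at hr
      exact (hder r (hsub (Ioo_subset_Icc_self hr))).differentiableAt.differentiableWithinAt
    · intro r hr
      rw [interior_Icc] at hr
      have hr0 : 0 < r := hsub (Ioo_subset_Icc_self hr)
      rw [(hder r hr0).deriv]
      have h1 : K ≤ g r := hK ⟨r, Ioo_subset_Icc_self hr, rfl⟩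
      have h2 := hp r hr0 hr.2
      have h3 := hwg r hr0
      have : 0 ≤ w' r - K * w r := by nlinarith
      have := mul_nonneg (Real.exp_pos (-K * r)).le this
      linarith
  have := hm (a := z/2) (b := z) ⟨le_rfl, by linarith⟩ ⟨by linarith, le_rfl⟩ (by linarith)
  simp only [hz, mul_zero] at this
  have h2 := mul_pos (Real.exp_pos (-K * (z/2))) (hp (z/2) (by linarith) (by linarith))
  linarith

theorem steady_u_derivative_sign (μ₁ : ℝ) (n : ℕ) (hμ : μ₁ < 0) (hn2 : 2 ≤ n)
    (h : ℝ → ℝ) (hsol : IsSteadySol n μ₁ h) :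
    (4 ≤ n → ∀ r : ℝ, 0 < r → 0 < deriv (fun s : ℝ => s * h s) r) ∧
    (n < 4 →
      (∀ r : ℝ, 0 < r → 0 < deriv (fun s : ℝ => s * h s) r) ∨
      (∃ s₀ : ℝ, 0 < s₀ ∧
        (∀ r : ℝ, 0 < r → r < s₀ → 0 < deriv (fun s : ℝ => s * h s) r) ∧
        deriv (fun s : ℝ => s * h s) s₀ = 0 ∧
        (∀ r : ℝ, s₀ < r → deriv (fun s : ℝ => s * h s) r < 0))) ∧
    ((∀ r : ℝ, 0 < r → 0 < deriv (fun s : ℝ => s * h s) r) →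
      Filter.Tendsto (deriv (fun s : ℝ => s * h s)) Filter.atTop (nhds 0)) := by
  obtain ⟨hC2, hC1, hode, hh0, hdw⟩ := hsol
  have hnR : (2:ℝ) ≤ n := by exact_mod_cast hn2
  set m : ℝ := (n:ℝ) - 1 with hm
  have hm1 : 1 ≤ m := by linarith
  have hC2d : ContDiffOn ℝ 1 (deriv h) (Ioi 0) :=
    ((contDiffOn_succ_iff_deriv_of_isOpen (n := 1) isOpen_Ioi).1 (by rw [one_add_one_eq_two]; exact hC2)).2.2
  have hd1 : ∀ r, 0 < r → HasDerivAt h (deriv h r) r := fun r hr =>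
    ((hC2.differentiableOn (by norm_num)).differentiableAt (Ioi_mem_nhds hr)).hasDerivAt
  have hd2 : ∀ r, 0 < r → HasDerivAt (deriv h) (deriv (deriv h) r) r := fun r hr =>
    ((hC2d.differentiableOn (by norm_num)).differentiableAt (Ioi_mem_nhds hr)).hasDerivAt
  have hhpos : ∀ r, 0 < r → 0 < h r := fun r hr => (hode r hr).2
  set p := deriv h with hpdef
  set q := deriv p with hqdef
  set w := deriv (fun s : ℝ => s * h s) with hwdef
  have hw : ∀ r, 0 < r → w r = h r + r * p r := by
    intro r hr
    have := ((hasDerivAt_id r).mul (hd1 r hr)).deriv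
    have h2 : w r = 1 * h r + r * p r := this
    linarith
  have hwd : ∀ r, 0 < r → HasDerivAt w (2 * p r + r * q r) r := by
    intro r hr
    have h1 : HasDerivAt (fun s => h s + s * p s) (p r + (1 * p r + r * q r)) r :=
      (hd1 r hr).add ((hasDerivAt_id r).mul (hd2 r hr))
    have h2 : w =ᶠ[𝓝 r] (fun s => h s + s * p s) := by
      filter_upwards [Ioi_mem_nhds hr] with s hs using hw s hs
    exact (h1.congr_of_eventuallyEq h2).congr_deriv (by ring)
  have hweq : ∀ r, 0 < r → 2 * (r * h r) * (2 * p r + r * q r) =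
      w r * (w r + 2 * h r - m) + (m - 3) * h r ^ 2 := by
    intro r hr
    have := (hode r hr).1
    rw [hw r hr]
    linear_combination this
  have hpt : Tendsto p (𝓝[>] 0) (𝓝 μ₁) := by
    have h1 : ContinuousOn (derivWithin h (Ici 0)) (Ici 0) :=
      hC1.continuousOn_derivWithin (uniqueDiffOn_Ici 0) (by norm_num)
    have h2 := (h1 0 self_mem_Ici).tendsto
    rw [hdw] at h2
    have h3 := h2.mono_left (nhdsWithin_mono 0 (Ioi_subset_Ici_self : Ioi (0:ℝ) ⊆ Ici 0))
    refine h3.congr' ?_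
    filter_upwards [self_mem_nhdsWithin] with r hr
    exact derivWithin_of_mem_nhds (Ici_mem_nhds hr)
  have hhc : ContinuousOn h (Ici 0) := hC1.continuousOn
  have hht : Tendsto h (𝓝[>] 0) (𝓝 1) := by
    have h2 := (hhc 0 self_mem_Ici).tendsto
    rw [hh0] at h2
    exact h2.mono_left (nhdsWithin_mono 0 (Ioi_subset_Ici_self : Ioi (0:ℝ) ⊆ Ici 0))
  have hwt : Tendsto w (𝓝[>] 0) (𝓝 1) := by
    have h1 : Tendsto (fun r : ℝ => r) (𝓝[>] 0) (𝓝 0) := nhdsWithin_le_nhds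
    have h2 := hht.add (h1.mul hpt)
    rw [zero_mul, add_zero] at h2
    refine h2.congr' ?_
    filter_upwards [self_mem_nhdsWithin] with r hr using (hw r hr).symm
  have hw0 : ∀ᶠ r in 𝓝[>] (0:ℝ), 0 < w r := hwt.eventually_const_lt (by norm_num)
  have hwc : ContinuousOn w (Ioi 0) := fun r hr => (hwd r hr).continuousAt.continuousWithinAt
  have hpc : ContinuousOn p (Ioi 0) := fun r hr => (hd2 r hr).continuousAt.continuousWithinAt
  refine ⟨?_, ?_, ?_⟩
  · intro hn4
    have hn4R : (4:ℝ) ≤ n := by exact_mod_cast hn4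
    by_contra hcon
    push Not at hcon
    obtain ⟨z, hz0, hz, hzp⟩ := aux_first_zero w 0 hwc hw0 hcon
    refine aux_no_zero w _ (fun r => (w r + 2 * h r - m) / (2 * (r * h r))) z hz0 hwd ?_ ?_ hzp hz
    · have hhc' := hhc.mono (Ioi_subset_Ici_self : Ioi (0:ℝ) ⊆ Ici 0)
      apply ContinuousOn.div
      · fun_prop
      · fun_prop
      · intro r hr
        have := hhpos r hr
        have hr : 0 < r := hr
        positivity
    · intro r hr
      have h1 := hhpos r hr
      have h2 := hweq r hr
      have h3 : 0 < 2 * (r * h r) := by positivity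
      rw [div_mul_eq_mul_div, div_le_iff₀ h3]
      have : 0 ≤ (m - 3) * h r ^ 2 := mul_nonneg (by linarith) (sq_nonneg _)
      linarith
  · intro hn4
    have hn4R : (n:ℝ) ≤ 3 := by exact_mod_cast (by omega : n ≤ 3)
    by_cases hall : ∀ r : ℝ, 0 < r → 0 < w r
    · exact Or.inl hall
    right
    push Not at hall
    obtain ⟨z, hz0, hz, hzp⟩ := aux_first_zero w 0 hwc hw0 hall
    have key : ∀ r, 0 < r → w r = 0 → 2 * p r + r * q r < 0 := by
      intro r hr hwr
      have h1 := hhpos r hr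
      have h2 := hweq r hr
      have h3 : 0 < 2 * (r * h r) := by positivity
      rw [hwr] at h2
      have : 0 < (3 - m) * h r ^ 2 := mul_pos (by linarith) (by positivity)
      by_contra hcon
      push Not at hcon
      have := mul_nonneg h3.le hcon
      linarith
    refine ⟨z, hz0, hzp, hz, ?_⟩
    by_contra hcon
    push Not at hcon
    obtain ⟨b, hb, hb2⟩ := hcon
    obtain ⟨y, hy0, hy, hyp⟩ := aux_first_zero (fun r => - w r) z
      ((hwc.mono (Ioi_subset_Ioi hz0.le)).neg)
      (by filter_upwards [aux_right_neg w z _ hz (hwd z hz0) (key z hz0 hz)] with r hr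
          linarith) ⟨b, hb, by linarith⟩
    have := aux_deriv_nonpos _ z y _ hy0 hy hyp (hwd y (by linarith)).neg
    have := key y (by linarith) (by linarith)
    linarith
  · intro hwp
    have hanti_of : ∀ z, 0 ≤ z → (∀ r, 0 < r → r < z → p r < 0) → StrictAntiOn h (Icc 0 z) := by
      intro z hz hp
      apply strictAntiOn_of_deriv_neg (convex_Icc _ _)
      · exact hhc.mono Icc_subset_Ici_self
      · intro r hr
        rw [interior_Icc] at hr
        exact hp r hr.1 hr.2
    have hpneg : ∀ r, 0 < r → p r < 0 := by
      by_contra hcon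
      push Not at hcon
      obtain ⟨b, hb, hb2⟩ := hcon
      obtain ⟨z, hz0, hz, hzp⟩ := aux_first_zero (fun r => - p r) 0 hpc.neg
        (by filter_upwards [hpt.eventually_lt_const hμ] with r hr
            linarith) ⟨b, hb, by linarith⟩
      have h1 := aux_deriv_nonpos _ 0 z _ hz0 hz hzp (hd2 z hz0).neg
      have h2 := hanti_of z hz0.le (fun r hr hr2 => by linarith [hzp r hr hr2])
        ⟨le_rfl, hz0.le⟩ ⟨hz0.le, le_rfl⟩ hz0
      rw [hh0] at h2
      have h3 := (hode z hz0).1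
      have h4 : p z = 0 := by linarith
      rw [h4] at h3
      have h5 := hhpos z hz0
      have h6 : 0 < m * h z * (1 - h z) := mul_pos (by positivity) (by linarith)
      have h7 : 0 ≤ 2 * z ^ 2 * h z * q z := mul_nonneg (by positivity) (by linarith)
      linarith
    have hanti : ∀ a b, 0 ≤ a → a < b → h b < h a := fun a b ha hab =>
      hanti_of b (by linarith) (fun r hr _ => hpneg r hr) ⟨ha, hab.le⟩ ⟨by linarith, le_rfl⟩ hab
    have hwh : ∀ r, 0 < r → w r < h r := by
      intro r hr
      rw [hw r hr]
      have := mul_neg_of_pos_of_neg hr (hpneg r hr)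
      linarith
    have hsmall : ∀ ε > 0, ∃ r, 0 < r ∧ h r < ε := by
      intro ε hε
      by_contra hcon
      push Not at hcon
      have h11 : h 1 < 1 := hh0 ▸ hanti 0 1 le_rfl one_pos
      set c := m / 2 * (1 - h 1) with hc
      have hcpos : 0 < c := mul_pos (by linarith) (by linarith)
      have hGd : ∀ r, 0 < r → HasDerivAt (fun r => r * p r + m / 2 * Real.log (h r) + c * Real.log r)
          ((1 * p r + r * q r) + m / 2 * (p r / h r) + c * r⁻¹) r := fun r hr =>
        (((hasDerivAt_id r).mul (hd2 r hr)).add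
          (((hd1 r hr).log (hhpos r hr).ne').const_mul _)).add
          ((Real.hasDerivAt_log hr.ne').const_mul c)
      have hGa : AntitoneOn (fun r => r * p r + m / 2 * Real.log (h r) + c * Real.log r) (Ici 1) := by
        have hs : ∀ r ∈ Ici (1:ℝ), 0 < r := fun r hr => lt_of_lt_of_le one_pos hr
        apply antitoneOn_of_deriv_nonpos (convex_Ici _)
        · exact fun r hr => (hGd r (hs r hr)).continuousAt.continuousWithinAt
        · exact fun r hr => (hGd r (hs r (interior_subset hr))).differentiableAt.differentiableWithinAt
        · intro r hr
          rw [interior_Ici] at hr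
          have hr1 : 1 < r := hr
          have hr0 : 0 < r := by linarith
          rw [(hGd r hr0).deriv]
          have e := (hode r hr0).1
          have hp := hhpos r hr0
          have hl := hanti 1 r zero_le_one hr1
          have hpn := mul_neg_of_pos_of_neg hr0 (hpneg r hr0)
          have hwr := hwp r hr0
          rw [hw r hr0] at hwr
          have e2 : (1 * p r + r * q r) + m / 2 * (p r / h r) + c * r⁻¹ =
            ((r * p r) * (2 * h r + r * p r) + m * h r * (h r - h 1)) / (2 * r * h r) := by
            rw [hc]
            field_simp
            linear_combination e
          rw [e2]
          apply div_nonpos_of_nonpos_of_nonneg _ (by positivity)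
          have a1 : (r * p r) * (2 * h r + r * p r) < 0 := mul_neg_of_neg_of_pos hpn (by linarith)
          have a2 : m * h r * (h r - h 1) < 0 := mul_neg_of_pos_of_neg (by positivity) (by linarith)
          linarith
      have hlogt : Tendsto (fun r => c * Real.log r) atTop atTop :=
        Real.tendsto_log_atTop.const_mul_atTop hcpos
      obtain ⟨r, hr1, hr2⟩ := ((hlogt.eventually_gt_atTop
        (1 * p 1 + m / 2 * Real.log (h 1) + c * Real.log 1 + 1 - m / 2 * Real.log ε)).and
          (eventually_gt_atTop 1)).exists
      have hr0 : 0 < r := by linarith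
      have a := hGa (a := 1) (b := r) self_mem_Ici hr2.le hr2.le
      simp only at a
      have b := hwp r hr0
      rw [hw r hr0] at b
      have b2 : h r < 1 := hh0 ▸ hanti 0 r le_rfl hr0
      have b3 : m / 2 * Real.log ε ≤ m / 2 * Real.log (h r) :=
        mul_le_mul_of_nonneg_left (Real.log_le_log hε (hcon r hr0)) (by linarith)
      linarith
    rw [Metric.tendsto_atTop]
    intro ε hε
    obtain ⟨r, hr, hr2⟩ := hsmall ε hε
    refine ⟨r + 1, fun s hs => ?_⟩
    have hs0 : 0 < s := by linarith
    rw [Real.dist_eq, sub_zero, abs_of_pos (hwp s hs0)]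
    linarith [hwh s hs0, hanti r s hr.le (by linarith)]
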